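/- Let $V$ be a finite reduced vertex algebra (no non-zero abelian ideals) and $N$ a nilpotent Lie conformal subalgebra of $V$. Then the adjoint action of every element of $N$ on $V$ is nilpotent: for each $s \in N$ and $v \in V$, iterated brackets $[s_{\lambda_1}[s_{\lambda_2}[\cdots[s_{\lambda_n} v]\cdots]]]$ vanish for sufficiently large $n$. -/

import Mathlib

open scoped BigOperators

/-- A vertex algebra structure on a complex vector space `V`.
`P n a b` denotes the `n`-th product `a_{(n)} b`, `vac` is the vacuum `𝟙`,
and `D` is the infinitesimal translation operator `T`. -/
structure VertexAlgebra (V : Type*) [AddCommGroup V] [Module ℂ V] where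
  P : ℤ → V →ₗ[ℂ] V →ₗ[ℂ] V
  vac : V
  D : V →ₗ[ℂ] V
  field_ax : ∀ a b : V, ∃ N : ℕ, ∀ n : ℕ, N ≤ n → P n a b = 0
  vac_field : ∀ (n : ℤ) (a : V), P n vac a = if n = -1 then a else 0
  creation : ∀ a : V, P (-1) a vac = a
  creation_pos : ∀ (a : V) (n : ℤ), 0 ≤ n → P n a vac = 0
  D_vac : D vac = 0
  transl_inv : ∀ (n : ℤ) (a b : V), P n (D a) b = (-n : ℂ) • P (n - 1) a b
  D_deriv : ∀ (n : ℤ) (a b : V), D (P n a b) = P n (D a) b + P n a (D b)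
  skew : ∀ (n : ℤ) (a b : V),
    P n a b = ∑ᶠ j : ℕ, (((-1 : ℂ) ^ (n + j + 1)) / (j.factorial : ℂ)) • (D ^ j) (P (n + j) b a)
  borcherds : ∀ (m k : ℤ) (a b c : V),
    P m a (P k b c) - P k b (P m a c)
      = ∑ᶠ j : ℕ, ((Ring.choose m j : ℤ) : ℂ) • P (m + k - j) (P j a b) c

namespace VertexAlgebra

variable {V : Type*} [AddCommGroup V] [Module ℂ V] (W : VertexAlgebra V)

/-- An ideal of a vertex algebra: a `ℂ[T]`-submodule closed under all products with
arbitrary elements of `V`. -/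
def IsIdeal (I : Submodule ℂ V) : Prop :=
  (∀ x ∈ I, W.D x ∈ I) ∧ ∀ (a : V), ∀ b ∈ I, ∀ n : ℤ, W.P n a b ∈ I

/-- `A · B`: the span of all products `a_{(j)} b`, `a ∈ A`, `b ∈ B`, `j ∈ ℤ`. -/
def prodSpan (A B : Submodule ℂ V) : Submodule ℂ V :=
  Submodule.span ℂ {x | ∃ a ∈ A, ∃ b ∈ B, ∃ j : ℤ, x = W.P j a b}

/-- `[A, B]`: the span of all products `a_{(j)} b`, `a ∈ A`, `b ∈ B`, `j ≥ 0`. -/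
def posSpan (A B : Submodule ℂ V) : Submodule ℂ V :=
  Submodule.span ℂ {x | ∃ a ∈ A, ∃ b ∈ B, ∃ j : ℕ, x = W.P j a b}

/-- The sequence `I^1 = I`, `I^{n+1} = I^n · I^n` (indexed so that `nilSeq I n = I^{n+1}`). -/
def nilSeq (I : Submodule ℂ V) : ℕ → Submodule ℂ V
  | 0 => I
  | n + 1 => W.prodSpan (nilSeq I n) (nilSeq I n)

/-- A nil-ideal: an ideal whose sequence of iterated self-products vanishes. -/
def IsNilIdeal (I : Submodule ℂ V) : Prop :=
  W.IsIdeal I ∧ ∃ n : ℕ, W.nilSeq I n = ⊥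

/-- A vertex algebra is finite if it is a finitely generated `ℂ[T]`-module. -/
def IsFinite : Prop :=
  ∃ s : Finset V, ∀ v : V,
    v ∈ Submodule.span ℂ {x | ∃ g ∈ s, ∃ k : ℕ, x = (W.D ^ k) g}

/-- Abelian ideal. -/
def IsAbelianIdeal (I : Submodule ℂ V) : Prop :=
  W.IsIdeal I ∧ ∀ a ∈ I, ∀ b ∈ I, ∀ n : ℤ, W.P n a b = 0

end VertexAlgebra

namespace VertexAlgebra

variable {V : Type*} [AddCommGroup V] [Module ℂ V]

/-- A Lie conformal subalgebra of (the Lie conformal algebra underlying) a vertex algebra: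
a `ℂ[T]`-submodule closed under all non-negative products. -/
def IsConfSubalgebra (W : VertexAlgebra V) (S : Submodule ℂ V) : Prop :=
  (∀ x ∈ S, W.D x ∈ S) ∧ ∀ a ∈ S, ∀ b ∈ S, ∀ n : ℕ, W.P n a b ∈ S

/-- `ψ` (given by its coefficients `ψ s h` of `λ^h/h!`) is a weight for the adjoint action
of `S` on `V`: there is a non-zero weight vector. -/
def IsWeight (W : VertexAlgebra V) (S : Submodule ℂ V) (ψ : V → ℕ → ℂ) : Prop :=
  ∃ v : V, v ≠ 0 ∧ ∀ s ∈ S, ∀ h : ℕ, W.P h s v = ψ s h • v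

/-- The ascending chain `V^ψ_0 = 0`, `V^ψ_{i+1} = {v | s_λ v - ψ_s(λ) v ∈ V^ψ_i[λ]}`. -/
def genWtSeq (W : VertexAlgebra V) (S : Submodule ℂ V) (ψ : V → ℕ → ℂ) : ℕ → Set V
  | 0 => {0}
  | i + 1 => {v | ∀ s ∈ S, ∀ h : ℕ, W.P h s v - ψ s h • v ∈ genWtSeq W S ψ i}

/-- The generalized weight space `V^ψ = ⋃ᵢ V^ψ_i`. -/
def genWt (W : VertexAlgebra V) (S : Submodule ℂ V) (ψ : V → ℕ → ℂ) : Set V :=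
  {v | ∃ i : ℕ, v ∈ genWtSeq W S ψ i}

end VertexAlgebra

namespace VertexAlgebra

variable {V : Type*} [AddCommGroup V] [Module ℂ V]

/-- The lower central series of a Lie conformal subalgebra `N` (as a submodule of `V`):
`N^[0] = N`, `N^[k+1] = [N, N^[k]]`. -/
def lcsOf (W : VertexAlgebra V) (N : Submodule ℂ V) : ℕ → Submodule ℂ V
  | 0 => N
  | k + 1 => W.posSpan N (lcsOf W N k)

/-- A finite reduced vertex algebra: no non-zero abelian ideals. -/
def IsReduced (W : VertexAlgebra V) : Prop :=
  ∀ I : Submodule ℂ V, W.IsAbelianIdeal I → I = ⊥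

end VertexAlgebra

namespace VertexAlgebra
open PowerSeries in
lemma alg_aux (ψ φ : PowerSeries ℂ) (D : ℕ)
    (h : ∀ n > D, coeff n
      ((map Polynomial.C φ + map Polynomial.C ψ * rescale (Polynomial.X : Polynomial ℂ) (exp (Polynomial ℂ))) *
        evalNegHom (map Polynomial.C φ + map Polynomial.C ψ *
          rescale (Polynomial.X : Polynomial ℂ) (exp (Polynomial ℂ)))) = 0) :
    ψ = 0 ∨ φ = 0 := by
  set E : PowerSeries (Polynomial ℂ) := rescale (Polynomial.X : Polynomial ℂ) (exp (Polynomial ℂ)) with hE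
  have hEE : E * evalNegHom E = 1 := by
    have : evalNegHom E = rescale (Polynomial.X : Polynomial ℂ) (evalNegHom (exp (Polynomial ℂ))) := by
      rw [hE]; ext n; simp [evalNegHom]; ring_nf
    rw [this, hE, ← map_mul, exp_mul_exp_neg_eq_one, map_one]
  have hmap : ∀ θ : PowerSeries ℂ, evalNegHom (map Polynomial.C θ) = map Polynomial.C (evalNegHom θ) := by
    intro θ; ext n; simp [evalNegHom]
  have hEc : ∀ (θ : PowerSeries ℂ) (a i : ℕ), ((coeff (i + a)) (map Polynomial.C θ * E)).coeff i
      = coeff a θ * (1 / (i.factorial : ℂ)) := by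
    intro θ a i
    rw [coeff_mul, Polynomial.finsetSum_coeff, Finset.sum_eq_single (a, i)]
    · simp [hE, coeff_exp]
    · rintro ⟨b, c⟩ hb hne
      simp only [Finset.HasAntidiagonal.mem_antidiagonal] at hb
      have : c ≠ i := by rintro rfl; exact hne (by ext <;> simp; omega)
      simp [hE, coeff_exp, Polynomial.coeff_X_pow, this.symm]
    · simp [add_comm]
  have hEc' : ∀ (θ : PowerSeries ℂ) (a i : ℕ), ((coeff (i + a)) (map Polynomial.C θ * evalNegHom E)).coeff i
      = coeff a θ * ((-1) ^ i / (i.factorial : ℂ)) := by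
    intro θ a i
    have h1 : map Polynomial.C θ * evalNegHom E = evalNegHom (map Polynomial.C (evalNegHom θ) * E) := by
      rw [map_mul, hmap]; congr 2; ext n; simp [evalNegHom, ← mul_assoc, ← mul_pow]
    rw [h1]
    have h2 : ∀ (f : PowerSeries (Polynomial ℂ)) (n : ℕ), (coeff n (evalNegHom f)).coeff i = (-1) ^ n * (coeff n f).coeff i := by
      intro f n
      simp only [evalNegHom, coeff_rescale]
      rcases Nat.even_or_odd n with hn | hn <;> simp [hn.neg_one_pow]
    rw [h2, hEc]
    simp only [evalNegHom, coeff_rescale]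
    have : ((-1 : ℂ)) ^ (i + a) * ((-1) ^ a) = (-1) ^ i := by
      rw [pow_add, mul_assoc, ← mul_pow]; simp
    rw [← this]; ring
  have hC : ∀ (θ : PowerSeries ℂ) (n i : ℕ), 0 < i → (coeff n (map Polynomial.C θ)).coeff i = 0 := by
    intro θ n i hi
    simp [Polynomial.coeff_C, hi.ne']
  have hexp : (map Polynomial.C φ + map Polynomial.C ψ * E) * evalNegHom (map Polynomial.C φ + map Polynomial.C ψ * E)
      = map Polynomial.C (φ * evalNegHom φ + ψ * evalNegHom ψ)
        + map Polynomial.C (evalNegHom φ * ψ) * E + map Polynomial.C (φ * evalNegHom ψ) * evalNegHom E := by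
    simp only [map_add, map_mul, hmap]
    linear_combination (map Polynomial.C ψ * map Polynomial.C (evalNegHom ψ)) * hEE
  rw [hexp] at h
  have key : ∀ i > D, ∀ a, coeff a (evalNegHom φ * ψ) + (-1) ^ i * coeff a (φ * evalNegHom ψ) = 0 := by
    intro i hi a
    have h1 := congrArg (fun p => Polynomial.coeff p i) (h (i + a) (by omega))
    simp only [map_add (coeff (i+a)), Polynomial.coeff_add, hC _ _ i (by omega), hEc, hEc', Polynomial.coeff_zero] at h1
    have hf : (i.factorial : ℂ) ≠ 0 := by exact_mod_cast i.factorial_ne_zero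
    field_simp at h1
    simpa [mul_comm] using h1
  have hz : evalNegHom φ * ψ = 0 := by
    ext a
    have h1 := key (D + 1) (by omega) a
    have h2 := key (D + 2) (by omega) a
    rw [pow_succ] at h2
    simp only [map_zero]
    linear_combination (h1 + h2) / 2
  rcases mul_eq_zero.1 hz with h0 | h0
  · right
    have : evalNegHom (evalNegHom φ) = φ := by ext n; simp [evalNegHom, ← mul_assoc, ← mul_pow]
    rw [← this, h0, map_zero]
  · exact Or.inl h0

variable {V : Type*} [AddCommGroup V] [Module ℂ V] (W : VertexAlgebra V)

lemma comm_formula (m : ℕ) (k : ℤ) (a b c : V) :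
    W.P m a (W.P k b c) = W.P k b (W.P m a c)
      + ∑ j ∈ Finset.range (m + 1), (m.choose j : ℂ) • W.P (m + k - j) (W.P j a b) c := by
  have h := W.borcherds m k a b c
  rw [finsum_eq_sum_of_support_subset (s := Finset.range (m + 1))] at h
  · rw [← sub_eq_iff_eq_add', h]
    refine Finset.sum_congr rfl fun j _ => ?_
    rw [Ring.choose_natCast]; simp
  · intro j hj
    by_contra hc
    apply hj
    simp only [Finset.coe_range, Set.mem_Iio, not_lt] at hc
    simp only [Ring.choose_natCast]
    rw [Nat.choose_eq_zero_of_lt (by omega)]; simp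

lemma P_D (h : ℕ) (s v : V) : W.P h s (W.D v) = W.D (W.P h s v) + (h : ℂ) • W.P ((h : ℤ) - 1) s v := by
  have := W.D_deriv h s v
  rw [W.transl_inv] at this
  rw [this]; simp

/-- normalized modes -/
noncomputable def sg (s : V) (m : ℕ) : Module.End ℂ V := ((m.factorial : ℂ)⁻¹) • W.P m s

lemma sg_D_zero (s : V) : W.sg s 0 * W.D = W.D * W.sg s 0 := by
  ext v; simp [sg]
  simpa using W.P_D 0 s v

lemma sg_D_succ (s : V) (m : ℕ) : W.sg s (m + 1) * W.D = W.D * W.sg s (m + 1) + W.sg s m := by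
  ext v
  have := W.P_D (m + 1) s v
  simp only [sg, Module.End.mul_apply, LinearMap.smul_apply, LinearMap.add_apply, this, smul_add, map_smul, smul_smul]
  congr 1
  have hf : (m.factorial : ℂ) ≠ 0 := by exact_mod_cast m.factorial_ne_zero
  have hm : ((m : ℂ) + 1) ≠ 0 := by exact_mod_cast (Nat.succ_ne_zero m)
  congr 1
  · rw [Nat.factorial_succ]; push_cast; field_simp
  · simp

lemma sg_field (s v : V) : ∃ N : ℕ, ∀ n ≥ N, W.sg s n v = 0 := by
  obtain ⟨N, hN⟩ := W.field_ax s v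
  exact ⟨N, fun n hn => by simp [sg, hN n hn]⟩

noncomputable def Cn (s : V) (n : ℕ) : Module.End ℂ V :=
  ∑ x ∈ Finset.HasAntidiagonal.antidiagonal n, W.sg s x.1 * ((-1 : ℂ) ^ x.2 • W.sg s x.2)

open PowerSeries in
lemma Cn_comm (s : V) (n : ℕ) : W.Cn s n * W.D = W.D * W.Cn s n := by
  let S : PowerSeries (Module.End ℂ V) := PowerSeries.mk (W.sg s)
  let S' : PowerSeries (Module.End ℂ V) := PowerSeries.mk (fun k => (-1 : ℂ) ^ k • W.sg s k)
  let T : PowerSeries (Module.End ℂ V) := PowerSeries.C W.D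
  have hS : S * T = T * S + X * S := by
    ext1 m
    rcases m with _ | m
    · simp [S, T, sg_D_zero]
    · simp [S, T, sg_D_succ, coeff_succ_X_mul]
  have hS' : S' * T = T * S' - X * S' := by
    ext1 m
    rcases m with _ | m
    · simp [S', T, sg_D_zero]
    · simp [S', T, sg_D_succ, coeff_succ_X_mul, pow_succ]
      abel
  have hX : S * (X * S') = X * S * S' := by
    rw [← mul_assoc, (commute_X S).eq]
  have h : (S * S') * T = T * (S * S') := by
    rw [mul_assoc, hS', mul_sub, hX, ← mul_assoc, hS, add_mul, mul_assoc T]; abel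
  have h2 := congrArg (coeff n) h
  have h3 : coeff n (S * S') = W.Cn s n := by simp only [coeff_mul, S, S', Cn, coeff_mk]
  simp only [T, coeff_mul_C, coeff_C_mul, h3] at h2
  exact h2

lemma Cn_zero (hfin : W.IsFinite) (s : V) : ∃ D : ℕ, ∀ n > D, W.Cn s n = 0 := by
  obtain ⟨G, hG⟩ := hfin
  have h1 : ∀ g : V, ∃ D : ℕ, ∀ n > D, W.Cn s n g = 0 := by
    intro g
    obtain ⟨k0, hk0⟩ := W.sg_field s g
    choose M hM using fun k => W.sg_field s (W.sg s k g)
    refine ⟨k0 + (Finset.range k0).sup M, fun n hn => ?_⟩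
    simp only [Cn, LinearMap.sum_apply]
    refine Finset.sum_eq_zero ?_
    rintro ⟨m, k⟩ hmk
    simp only [Finset.HasAntidiagonal.mem_antidiagonal] at hmk
    simp only [Module.End.mul_apply, LinearMap.smul_apply, map_smul]
    by_cases hk : k0 ≤ k
    · simp [hk0 k hk]
    · have : M k ≤ (Finset.range k0).sup M := Finset.le_sup (by simpa using hk)
      rw [hM k m (by omega), smul_zero]
  choose D hD using h1
  refine ⟨G.sup D, fun n hn => ?_⟩
  ext v
  refine Submodule.span_induction ?_ (by simp) (fun x y _ _ hx hy => by simp_all) (fun c x _ hx => by simp_all) (hG v)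
  rintro _ ⟨g, hg, k, rfl⟩
  have hc : Commute (W.Cn s n) (W.D ^ k) := Commute.pow_right (W.Cn_comm s n) k
  rw [← Module.End.mul_apply, hc.eq, Module.End.mul_apply, hD g n (lt_of_le_of_lt (Finset.le_sup hg) hn)]
  simp

end VertexAlgebra

namespace VertexAlgebra
variable {V : Type*} [AddCommGroup V] [Module ℂ V] (W : VertexAlgebra V)

/-- shift operator on sequences -/
def shiftOp : Module.End ℂ (ℤ → V) where
  toFun w k := w (k + 1)
  map_add' _ _ := rfl
  map_smul' _ _ := rfl

lemma shiftOp_pow (r : ℕ) (w : ℤ → V) (k : ℤ) : ((shiftOp (V := V)) ^ r) w k = w (k + r) := by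
  induction r generalizing k with
  | zero => simp
  | succ r ih => rw [pow_succ', Module.End.mul_apply]; simp only [shiftOp, LinearMap.coe_mk, AddHom.coe_mk] at ih ⊢; rw [ih]; congr 1; push_cast; ring

/-- componentwise operator -/
def compOp (f : Module.End ℂ V) : Module.End ℂ (ℤ → V) where
  toFun w k := f (w k)
  map_add' _ _ := by ext; simp
  map_smul' _ _ := by ext; simp

lemma aeval_shiftOp_inj (w : ℤ → V) (K : ℤ) (hK : ∀ k ≥ K, w k = 0) (hw : w ≠ 0)
    (g : Polynomial ℂ) (hg : Polynomial.aeval (shiftOp (V := V)) g w = 0) : g = 0 := by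
  -- find the maximal index
  obtain ⟨k1, hk1⟩ : ∃ k, w k ≠ 0 := by
    by_contra h; push Not at h; exact hw (funext h)
  obtain ⟨M, hM, hMmax⟩ := Int.exists_greatest_of_bdd (P := fun k => w k ≠ 0)
    ⟨K, fun z hz => by by_contra h; exact hz (hK z (by omega))⟩ ⟨k1, hk1⟩
  have hz : ∀ k > M, w k = 0 := fun k hk => by
    by_contra h; exact absurd (hMmax k h) (by omega)
  ext i
  simp only [Polynomial.coeff_zero]
  induction i using Nat.strong_induction_on with
  | _ i ih =>
    have h1 := congrFun hg (M - i)
    rw [Polynomial.aeval_eq_sum_range] at h1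
    simp only [LinearMap.sum_apply, Finset.sum_apply, LinearMap.smul_apply, Pi.smul_apply, shiftOp_pow, Pi.zero_apply] at h1
    by_cases hi : i ≤ g.natDegree
    · rw [Finset.sum_eq_single i] at h1
      · simp only [sub_add_cancel, smul_eq_zero] at h1
        exact h1.resolve_right hM
      · intro j _ hj
        rcases lt_or_gt_of_ne hj with h | h
        · rw [ih j h, zero_smul]
        · rw [hz _ (by omega), smul_zero]
      · intro h; exact absurd (Finset.mem_range.2 (by omega)) h
    · exact Polynomial.coeff_eq_zero_of_natDegree_lt (by omega)

open PowerSeries in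
lemma key_vanish (hfin : W.IsFinite) (s : V) (ψ φ : ℕ → ℂ) (hψ : ψ ≠ 0) (hφ : φ ≠ 0) (w : ℤ → V)
    (hw : ∀ (m : ℕ) (k : ℤ), W.P m s (w k) = φ m • w k
      + ∑ j ∈ Finset.range (m + 1), (m.choose j : ℂ) • ψ j • w (m + k - j))
    (K : ℤ) (hK : ∀ k ≥ K, w k = 0) : w = 0 := by
  by_contra hne
  obtain ⟨D, hD⟩ := W.Cn_zero hfin s
  let ψ' : PowerSeries ℂ := PowerSeries.mk fun m => ψ m / m.factorial
  let φ' : PowerSeries ℂ := PowerSeries.mk fun m => φ m / m.factorial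
  let H := map Polynomial.C φ' + map Polynomial.C ψ' * rescale (Polynomial.X : Polynomial ℂ) (exp (Polynomial ℂ))
  have hfz : ∀ m : ℕ, (m.factorial : ℂ) ≠ 0 := fun m => by exact_mod_cast m.factorial_ne_zero
  have hH : ∀ m, compOp (W.sg s m) w = Polynomial.aeval shiftOp (coeff m H) w := by
    intro m
    ext k
    have e1 : coeff m H = Polynomial.C (φ m / m.factorial) + ∑ j ∈ Finset.range (m + 1),
        Polynomial.C (ψ j / j.factorial * (1 / (m - j).factorial)) * Polynomial.X ^ (m - j) := by
      simp only [H, map_add, coeff_mul, Finset.Nat.sum_antidiagonal_eq_sum_range_succ_mk, coeff_map]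
      congr 1
      · simp [φ']
      · refine Finset.sum_congr rfl fun j _ => ?_
        simp only [ψ', coeff_mk, coeff_rescale, coeff_exp, Polynomial.C_mul]
        rw [mul_assoc, mul_comm (Polynomial.X ^ (m-j))]
        congr 2
        simp [Polynomial.algebraMap_eq, Polynomial.algebraMap_apply]
    rw [e1]
    simp only [compOp, sg, LinearMap.coe_mk, AddHom.coe_mk, LinearMap.smul_apply, hw, map_add, map_sum, map_mul,
      Polynomial.aeval_C, Polynomial.aeval_X_pow, LinearMap.add_apply, LinearMap.sum_apply, Module.End.mul_apply,
      Module.algebraMap_end_apply, Pi.add_apply, Finset.sum_apply, Pi.smul_apply, shiftOp_pow, smul_add, Finset.smul_sum, smul_smul]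
    congr 1
    · congr 1; ring
    · refine Finset.sum_congr rfl fun j hj => ?_
      have hj' : j ≤ m := by simpa [Nat.lt_succ_iff] using hj
      congr 1
      · rw [Nat.cast_choose ℂ hj']
        have := hfz m; have := hfz j; have := hfz (m - j)
        field_simp
      · congr 1; push_cast [hj']; ring
  have hcomm : ∀ m (g : Polynomial ℂ), compOp (W.sg s m) (Polynomial.aeval shiftOp g w) =
      Polynomial.aeval shiftOp g (compOp (W.sg s m) w) := by
    intro m g
    have : Commute (compOp (W.sg s m)) (shiftOp (V := V)) := by
      ext; rfl
    have h2 : Commute (compOp (W.sg s m)) (Polynomial.aeval shiftOp g) := by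
      rw [Polynomial.aeval_eq_sum_range]
      exact Commute.sum_right _ _ _ fun i _ => (this.pow_right i).smul_right _
    rw [← Module.End.mul_apply, h2.eq, Module.End.mul_apply]
  have hz : ∀ n > D, coeff n (H * evalNegHom H) = 0 := by
    intro n hn
    apply aeval_shiftOp_inj w K hK hne
    rw [coeff_mul]
    have : ∀ x : ℕ × ℕ, Polynomial.aeval shiftOp (coeff x.1 H * coeff x.2 (evalNegHom H)) w
        = compOp (W.sg s x.1 * ((-1 : ℂ) ^ x.2 • W.sg s x.2)) w := by
      intro x
      have h3 : coeff x.2 (evalNegHom H) = Polynomial.C ((-1) ^ x.2) * coeff x.2 H := by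
        simp [evalNegHom, coeff_rescale]
      rw [h3, mul_comm (coeff x.1 H), mul_assoc, map_mul, map_mul, Module.End.mul_apply, Module.End.mul_apply, ← hH, ← hcomm, ← hH]
      rw [Polynomial.aeval_C, Module.algebraMap_end_apply]
      ext k; simp [compOp]
    simp only [map_sum, LinearMap.sum_apply, this]
    ext k
    have h4 := congrArg (fun f => f (w k)) (hD n hn)
    simpa [Cn, compOp] using h4
  have := alg_aux ψ' φ' D hz
  rcases this with h | h
  · apply hψ; ext m
    have := congrArg (coeff m) h
    simpa [ψ', hfz] using this
  · apply hφ; ext m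
    have := congrArg (coeff m) h
    simpa [φ', hfz] using this

/-- generalized weight spaces for a single element -/
def gw (s : V) (φ : ℕ → ℂ) : ℕ → Submodule ℂ V
  | 0 => ⊥
  | i + 1 => ⨅ h : ℕ, (gw s φ i).comap (W.P h s - φ h • LinearMap.id)

lemma mem_gw_succ (s : V) (φ : ℕ → ℂ) (i : ℕ) (v : V) :
    v ∈ W.gw s φ (i + 1) ↔ ∀ h : ℕ, W.P h s v - φ h • v ∈ W.gw s φ i := by
  simp [gw, Submodule.mem_iInf]

lemma gw_mono (s : V) (φ : ℕ → ℂ) : Monotone (W.gw s φ) := by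
  refine monotone_nat_of_le_succ fun i => ?_
  induction i with
  | zero => simp [gw]
  | succ i ih => 
    intro v hv
    rw [mem_gw_succ] at hv ⊢
    exact fun h => ih (hv h)

lemma gw_stable (s : V) (φ : ℕ → ℂ) (i : ℕ) (v : V) (hv : v ∈ W.gw s φ i) (h : ℕ) : W.P h s v ∈ W.gw s φ i := by
  rcases i with _ | i
  · simp [gw] at hv ⊢; simp [hv]
  · have := W.gw_mono s φ (Nat.le_succ i) ((W.mem_gw_succ s φ i v).1 hv h)
    simpa using Submodule.add_mem _ this (Submodule.smul_mem _ (φ h) hv)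

lemma gw_D (s : V) (φ : ℕ → ℂ) (i : ℕ) (v : V) (hv : v ∈ W.gw s φ i) : W.D v ∈ W.gw s φ (2 * i) := by
  induction i generalizing v with
  | zero => simp [gw] at hv ⊢; simp [hv]
  | succ i ih =>
    rw [show 2 * (i + 1) = (2 * i + 1) + 1 by ring, mem_gw_succ]
    intro h
    have e : W.P h s (W.D v) - φ h • W.D v = W.D (W.P h s v - φ h • v) + (h : ℂ) • W.P ((h : ℤ) - 1) s v := by
      rw [P_D, map_sub, map_smul]; abel
    rw [e]
    refine Submodule.add_mem _ (W.gw_mono s φ (Nat.le_succ _) (ih _ ((W.mem_gw_succ s φ i v).1 hv h))) ?_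
    rcases h with _ | h
    · simp
    · refine Submodule.smul_mem _ _ (W.gw_mono s φ (show i + 1 ≤ 2 * i + 1 by omega) ?_)
      simpa using W.gw_stable s φ (i+1) v hv h

lemma gw_zero_mul (s : V) (φ : ℕ → ℂ) (n i j : ℕ) (hn : i + j = n) (a b : V) (ha : a ∈ W.gw s 0 i) (hb : b ∈ W.gw s φ j) (k : ℤ) :
    W.P k a b ∈ W.gw s φ n := by
  induction n generalizing i j a b k with
  | zero => 
    obtain ⟨rfl, rfl⟩ : i = 0 ∧ j = 0 := by omega
    simp [gw] at ha; simp [ha]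
  | succ n ih =>
    rcases i with _ | i
    · simp [gw] at ha; simp [ha]
    rcases j with _ | j
    · simp [gw] at hb; simp [hb]
    rw [mem_gw_succ]
    intro m
    rw [W.comm_formula]
    have e : ∀ x : V, W.P k a (W.P m s b) + x - φ m • W.P k a b = W.P k a (W.P m s b - φ m • b) + x := by
      intro x; rw [map_sub, map_smul]; abel
    rw [e]
    refine Submodule.add_mem _ (ih (i+1) j (by omega) _ _ ha ((W.mem_gw_succ s φ j b).1 hb m) k) ?_
    refine Submodule.sum_mem _ fun l _ => Submodule.smul_mem _ _ ?_
    refine ih i (j+1) (by omega) _ _ ?_ hb _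
    simpa using (W.mem_gw_succ s 0 i a).1 ha l

lemma gw_mul_zero (hfin : W.IsFinite) (s : V) (ψ φ : ℕ → ℂ) (hψ : ψ ≠ 0) (hφ : φ ≠ 0) (n i j : ℕ) (hn : i + j = n)
    (a b : V) (ha : a ∈ W.gw s ψ i) (hb : b ∈ W.gw s φ j) (k : ℤ) : W.P k a b = 0 := by
  induction n generalizing i j a b k with
  | zero => 
    obtain ⟨rfl, rfl⟩ : i = 0 ∧ j = 0 := by omega
    simp [gw] at ha; simp [ha]
  | succ n ih =>
    rcases i with _ | i
    · simp [gw] at ha; simp [ha]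
    rcases j with _ | j
    · simp [gw] at hb; simp [hb]
    have h1 : ∀ (m : ℕ) (k : ℤ), W.P k a (W.P m s b) = φ m • W.P k a b := by
      intro m k
      have := ih (i+1) j (by omega) _ _ ha ((W.mem_gw_succ s φ j b).1 hb m) k
      rwa [map_sub, map_smul, sub_eq_zero] at this
    have h2 : ∀ (m : ℕ) (k : ℤ), W.P k (W.P m s a) b = ψ m • W.P k a b := by
      intro m k
      have := ih i (j+1) (by omega) _ _ ((W.mem_gw_succ s ψ i a).1 ha m) hb k
      rwa [map_sub, map_smul, LinearMap.sub_apply, LinearMap.smul_apply, sub_eq_zero] at this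
    obtain ⟨K, hK⟩ := W.field_ax a b
    have := W.key_vanish hfin s ψ φ hψ hφ (fun k => W.P k a b) (fun m k => by
      rw [W.comm_formula, h1]; simp only [h2]) K (fun k hk => by
        obtain ⟨k', rfl⟩ := Int.eq_ofNat_of_zero_le (show 0 ≤ k by omega)
        exact hK k' (by simpa using hk))
    exact congrFun this k

/-- Conclusion from the weight space decomposition. -/
lemma final_of_decomp (hfin : W.IsFinite) (hred : W.IsReduced) (s : V)
    (hdec : (⨆ φ : ℕ → ℂ, ⨆ i, W.gw s φ i) = ⊤) (v : V) : ∃ i, v ∈ W.gw s 0 i := by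
  have hdir : ∀ φ x, x ∈ (⨆ i, W.gw s φ i) ↔ ∃ i, x ∈ W.gw s φ i := fun φ x =>
    Submodule.mem_iSup_of_directed _ (W.gw_mono s φ).directed_le
  let I : Submodule ℂ V := ⨆ φ : {φ : ℕ → ℂ // φ ≠ 0}, ⨆ i, W.gw s φ i
  have hIle : ∀ φ (hφ : φ ≠ 0) i x, x ∈ W.gw s φ i → x ∈ I := fun φ hφ i x hx =>
    Submodule.mem_iSup_of_mem (⟨φ, hφ⟩ : {φ : ℕ → ℂ // φ ≠ 0}) (Submodule.mem_iSup_of_mem i hx)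
  have hIind : ∀ (q : V → Prop), (∀ φ ≠ (0 : ℕ → ℂ), ∀ i, ∀ x ∈ W.gw s φ i, q x) → q 0 →
      (∀ x y, q x → q y → q (x + y)) → ∀ x ∈ I, q x := by
    intro q h1 h0 ha x hx
    refine Submodule.iSup_induction _ (motive := q) hx (fun φ x hx => ?_) h0 ha
    obtain ⟨i, hi⟩ := (hdir _ _).1 hx
    exact h1 φ φ.2 i x hi
  have hVind : ∀ (q : V → Prop), (∀ φ i, ∀ x ∈ W.gw s φ i, q x) → q 0 →
      (∀ x y, q x → q y → q (x + y)) → ∀ x, q x := by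
    intro q h1 h0 ha x
    have hx : x ∈ (⨆ φ : ℕ → ℂ, ⨆ i, W.gw s φ i) := hdec ▸ Submodule.mem_top
    refine Submodule.iSup_induction _ (motive := q) hx (fun φ x hx => ?_) h0 ha
    obtain ⟨i, hi⟩ := (hdir _ _).1 hx
    exact h1 φ i x hi
  have hI : I = ⊥ := by
    apply hred
    refine ⟨⟨?_, ?_⟩, ?_⟩
    · refine hIind _ (fun φ hφ i x hx => hIle φ hφ _ _ (W.gw_D s φ i x hx)) (by simp) ?_
      intro x y hx hy; rw [map_add]; exact I.add_mem hx hy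
    · intro a b hb n
      refine hIind (fun b => W.P n a b ∈ I) (fun φ hφ j b hb => ?_) (by simp) (fun x y hx hy => by
        simp only [map_add]; exact I.add_mem hx hy) b hb
      refine hVind (fun a => W.P n a b ∈ I) (fun ψ i a ha => ?_) (by simp) (fun x y hx hy => by
        simp only [map_add, LinearMap.add_apply]; exact I.add_mem hx hy) a
      by_cases hψ : ψ = 0
      · subst hψ
        exact hIle φ hφ _ _ (W.gw_zero_mul s φ _ i j rfl a b ha hb n)
      · rw [W.gw_mul_zero hfin s ψ φ hψ hφ _ i j rfl a b ha hb n]; exact I.zero_mem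
    · intro a ha b hb n
      refine hIind (fun b => W.P n a b = 0) (fun φ hφ j b hb => ?_) (by simp) (fun x y hx hy => by
        simp [hx, hy]) b hb
      refine hIind (fun a => W.P n a b = 0) (fun ψ hψ i a ha => ?_) (by simp) (fun x y hx hy => by
        simp [hx, hy]) a ha
      exact W.gw_mul_zero hfin s ψ φ hψ hφ _ i j rfl a b ha hb n
  refine hVind (fun v => ∃ i, v ∈ W.gw s 0 i) (fun φ i x hx => ?_) ⟨0, Submodule.zero_mem _⟩ ?_ v
  · by_cases hφ : φ = 0
    · subst hφ; exact ⟨i, hx⟩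
    · have := hIle φ hφ i x hx
      rw [hI, Submodule.mem_bot] at this
      exact ⟨0, by simp [this]⟩
  · intro x y hx hy
    rw [← hdir] at hx hy ⊢
    exact Submodule.add_mem _ hx hy

lemma foldr_zero (s : V) (ks : List ℕ) (i : ℕ) (v : V) (hv : v ∈ W.gw s 0 i) (h : i ≤ ks.length) :
    ks.foldr (fun (k : ℕ) w => W.P k s w) v = 0 := by
  have : ks.foldr (fun (k : ℕ) w => W.P k s w) v ∈ W.gw s 0 (i - ks.length) := by
    clear h
    induction ks with
    | nil => simpa using hv
    | cons k ks ih =>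
      simp only [List.foldr_cons, List.length_cons]
      rcases hj : i - ks.length with _ | j
      · rw [hj] at ih
        have : i - (ks.length + 1) = 0 := by omega
        rw [this]
        exact W.gw_stable s 0 0 _ ih k
      · rw [hj] at ih
        have : i - (ks.length + 1) = j := by omega
        rw [this]
        simpa using (W.mem_gw_succ s 0 j _).1 ih k
  rw [Nat.sub_eq_zero_of_le h] at this
  simpa [gw] using this
end VertexAlgebra

namespace VertexAlgebra
variable {V : Type*} [AddCommGroup V] [Module ℂ V] (W : VertexAlgebra V)

lemma lcsOf_le (N : Submodule ℂ V) (hN : W.IsConfSubalgebra N) (i : ℕ) : W.lcsOf N i ≤ N := by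
  induction i with
  | zero => exact le_rfl
  | succ i ih =>
    refine Submodule.span_le.2 ?_
    rintro _ ⟨a, ha, b, hb, j, rfl⟩
    exact hN.2 a ha b (ih hb) j

/-- span of the restrictions to `F` of the modes of elements of `A` -/
def modeSpan (F A : Submodule ℂ V) : Submodule ℂ (Module.End ℂ F) :=
  Submodule.span ℂ {f | ∃ s ∈ A, ∃ j : ℕ, ∀ x : F, (f x : V) = W.P j s x}

lemma modeSpan_bot (F : Submodule ℂ V) : W.modeSpan F ⊥ = ⊥ := by
  refine Submodule.span_eq_bot.2 ?_
  rintro f ⟨s, hs, j, h⟩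
  ext x
  rw [Submodule.mem_bot] at hs
  simp [h, hs]

attribute [local instance 100] LieRing.ofAssociativeRing

lemma lie_modeSpan (N : Submodule ℂ V) (hN : W.IsConfSubalgebra N) (F : Submodule ℂ V)
    (hst : ∀ s ∈ N, ∀ j : ℕ, ∀ x ∈ F, W.P j s x ∈ F) (A : Submodule ℂ V) (hA : A ≤ N)
    (f g : Module.End ℂ F) (hf : f ∈ W.modeSpan F N) (hg : g ∈ W.modeSpan F A) :
    ⁅f, g⁆ ∈ W.modeSpan F (W.posSpan N A) := by
  induction hf using Submodule.span_induction with
  | zero => simp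
  | add x y _ _ hx hy => rw [add_lie]; exact Submodule.add_mem _ hx hy
  | smul c x _ hx => rw [smul_lie]; exact Submodule.smul_mem _ _ hx
  | mem f hf =>
    obtain ⟨a, ha, m, hf⟩ := hf
    induction hg using Submodule.span_induction with
    | zero => simp
    | add x y _ _ hx hy => rw [lie_add]; exact Submodule.add_mem _ hx hy
    | smul c x _ hx => rw [lie_smul]; exact Submodule.smul_mem _ _ hx
    | mem g hg =>
      obtain ⟨b, hb, k, hg⟩ := hg
      have hAN : W.posSpan N A ≤ N := by
        refine Submodule.span_le.2 ?_
        rintro _ ⟨a, ha, b, hb, j, rfl⟩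
        exact hN.2 a ha b (hA hb) j
      have hmem : ∀ j : ℕ, W.P j a b ∈ W.posSpan N A := fun j =>
        Submodule.subset_span ⟨a, ha, b, hb, j, rfl⟩
      have e : ⁅f, g⁆ = ∑ j ∈ Finset.range (m + 1), (m.choose j : ℂ) •
          ((W.P ((m + k - j : ℕ) : ℤ) (W.P j a b)).restrict (p := F) (q := F)
            (hst _ (hAN (hmem j)) (m + k - j))) := by
        ext x
        rw [LieRing.of_associative_ring_bracket]
        simp only [LinearMap.sub_apply, Module.End.mul_apply, LinearMap.sum_apply, LinearMap.smul_apply,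
          Submodule.coe_sub, hf, hg, Submodule.coe_sum, Submodule.coe_smul, LinearMap.coe_restrict_apply]
        rw [W.comm_formula, add_sub_cancel_left]
        refine Finset.sum_congr rfl fun j hj => ?_
        have : j ≤ m := by simpa [Nat.lt_succ_iff] using hj
        rw [Nat.cast_sub (by omega)]; push_cast; rfl
      rw [e]
      refine Submodule.sum_mem _ fun j _ => Submodule.smul_mem _ _ (Submodule.subset_span ?_)
      exact ⟨_, hmem j, m + k - j, fun x => rfl⟩

lemma modeSpan_mono (F : Submodule ℂ V) {A B : Submodule ℂ V} (h : A ≤ B) : W.modeSpan F A ≤ W.modeSpan F B :=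
  Submodule.span_mono fun _ ⟨s, hs, j, hx⟩ => ⟨s, h hs, j, hx⟩

/-- the Lie algebra of operators on `F` generated by modes of `N` -/
def modeLie (N : Submodule ℂ V) (hN : W.IsConfSubalgebra N) (F : Submodule ℂ V)
    (hst : ∀ s ∈ N, ∀ j : ℕ, ∀ x ∈ F, W.P j s x ∈ F) : LieSubalgebra ℂ (Module.End ℂ F) :=
  { W.modeSpan F N with
    lie_mem' := fun {f g} hf hg => W.modeSpan_mono F (W.lcsOf_le N hN 1)
      (W.lie_modeSpan N hN F hst N le_rfl f g hf hg) }

lemma modeLie_nilpotent (N : Submodule ℂ V) (hN : W.IsConfSubalgebra N) (hnilp : ∃ k : ℕ, W.lcsOf N k = ⊥)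
    (F : Submodule ℂ V) (hst : ∀ s ∈ N, ∀ j : ℕ, ∀ x ∈ F, W.P j s x ∈ F) :
    LieRing.IsNilpotent (W.modeLie N hN F hst) := by
  obtain ⟨k, hk⟩ := hnilp
  have key : ∀ i, ∀ x ∈ LieModule.lowerCentralSeries ℂ (W.modeLie N hN F hst) (W.modeLie N hN F hst) i,
      (x : Module.End ℂ F) ∈ W.modeSpan F (W.lcsOf N i) := by
    intro i
    induction i with
    | zero => intro x _; exact x.2
    | succ i ih =>
      intro x hx
      rw [LieModule.lowerCentralSeries_succ, ← LieSubmodule.mem_toSubmodule,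
        LieSubmodule.lieIdeal_oper_eq_linear_span'] at hx
      induction hx using Submodule.span_induction with
      | zero => exact Submodule.zero_mem _
      | add x y _ _ hx hy => exact Submodule.add_mem _ hx hy
      | smul c x _ hx => exact Submodule.smul_mem _ _ hx
      | mem x hx =>
        obtain ⟨y, -, z, hz, rfl⟩ := hx
        exact W.lie_modeSpan N hN F hst _ (W.lcsOf_le N hN i) _ _ y.2 (ih z hz)
  refine LieModule.IsNilpotent.mk (R := ℂ) _ (k := k) ?_
  rw [LieSubmodule.eq_bot_iff]
  intro x hx
  have := key k x hx
  rw [hk, modeSpan_bot, Submodule.mem_bot] at this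
  exact Subtype.ext this

lemma le_gw (N : Submodule ℂ V) (hN : W.IsConfSubalgebra N) (hnilp : ∃ k : ℕ, W.lcsOf N k = ⊥)
    (F : Submodule ℂ V) [FiniteDimensional ℂ F] (hst : ∀ s ∈ N, ∀ j : ℕ, ∀ x ∈ F, W.P j s x ∈ F)
    (s : V) (hs : s ∈ N) : F ≤ ⨆ φ : ℕ → ℂ, ⨆ i, W.gw s φ i := by
  have := W.modeLie_nilpotent N hN hnilp F hst
  let L := W.modeLie N hN F hst
  let t : ℕ → L := fun j => ⟨(W.P j s).restrict (p := F) (q := F) (hst s hs j),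
    Submodule.subset_span ⟨s, hs, j, fun x => rfl⟩⟩
  intro x hx
  have htop : (⟨x, hx⟩ : F) ∈ (⨆ χ : L → ℂ, (LieModule.genWeightSpace F χ : LieSubmodule ℂ L F)) := by
    rw [LieModule.iSup_genWeightSpace_eq_top]; trivial
  have hle : (⨆ χ : L → ℂ, ((LieModule.genWeightSpace F χ : LieSubmodule ℂ L F) : Submodule ℂ F)) ≤
      (⨆ φ : ℕ → ℂ, ⨆ i, W.gw s φ i).comap F.subtype := by
    refine iSup_le fun χ => ?_
    intro y hy
    obtain ⟨k, hk⟩ := LieModule.IsNilpotent.nilpotent ℂ L (LieModule.shiftedGenWeightSpace ℂ L F χ)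
    have key : ∀ i ≤ k, ∀ z ∈ LieModule.lowerCentralSeries ℂ L (LieModule.shiftedGenWeightSpace ℂ L F χ) (k - i),
        ((z : F) : V) ∈ W.gw s (fun h => χ (t h)) i := by
      intro i
      induction i with
      | zero =>
        intro _ z hz
        rw [Nat.sub_zero, hk, LieSubmodule.mem_bot] at hz
        rw [hz]; exact Submodule.zero_mem _
      | succ i ih =>
        intro hi z hz
        rw [mem_gw_succ]
        intro h
        have h1 : ⁅t h, z⁆ ∈ LieModule.lowerCentralSeries ℂ L (LieModule.shiftedGenWeightSpace ℂ L F χ) (k - i) := by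
          rw [show k - i = (k - (i + 1)) + 1 by omega, LieModule.lowerCentralSeries_succ]
          exact LieSubmodule.lie_mem_lie (LieSubmodule.mem_top _) hz
        have h2 := ih (by omega) _ h1
        rw [LieModule.shiftedGenWeightSpace.coe_lie_shiftedGenWeightSpace_apply] at h2
        exact h2
    have := key k le_rfl ⟨y, hy⟩ (by simp)
    exact Submodule.mem_iSup_of_mem _ (Submodule.mem_iSup_of_mem k this)
  rw [← LieSubmodule.mem_toSubmodule, LieSubmodule.iSup_toSubmodule] at htop
  exact hle htop
end VertexAlgebra

namespace VertexAlgebra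
variable {V : Type*} [AddCommGroup V] [Module ℂ V] (W : VertexAlgebra V)

lemma aeval_finite (hfin : W.IsFinite) : Module.Finite (Polynomial ℂ) (Module.AEval' W.D) := by
  obtain ⟨G, hG⟩ := hfin
  classical
  refine ⟨⟨G.image (Module.AEval'.of W.D), ?_⟩⟩
  rw [eq_top_iff]
  intro x _
  obtain ⟨v, rfl⟩ := (Module.AEval'.of W.D).surjective x
  have hv := hG v
  induction hv using Submodule.span_induction with
  | zero => rw [map_zero]; exact Submodule.zero_mem _
  | add x y _ _ hx hy => rw [map_add]; exact Submodule.add_mem _ (hx trivial) (hy trivial)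
  | smul c x _ hx =>
    have : Module.AEval'.of W.D (c • x) = (Polynomial.C c) • Module.AEval'.of W.D x := by
      rw [map_smul]; exact (Module.AEval.C_smul _ _ _).symm
    rw [this]; exact Submodule.smul_mem _ _ (hx trivial)
  | mem x hx =>
    obtain ⟨g, hg, k, rfl⟩ := hx
    have := Module.AEval'.X_pow_smul_of W.D g k
    rw [Module.End.smul_def] at this
    rw [← this]
    refine Submodule.smul_mem _ _ (Submodule.subset_span ?_)
    simpa using hg

lemma aeval_noeth (hfin : W.IsFinite) : IsNoetherian (Polynomial ℂ) (Module.AEval' W.D) := by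
  have := W.aeval_finite hfin
  infer_instance

lemma exists_max (hfin : W.IsFinite) (S : Set (Submodule ℂ V)) (hS : S.Nonempty)
    (hD : ∀ A ∈ S, ∀ x ∈ A, W.D x ∈ A) : ∃ A ∈ S, ∀ B ∈ S, ¬ A < B := by
  have := W.aeval_noeth hfin
  let T : Set (Submodule (Polynomial ℂ) (Module.AEval' W.D)) :=
    {q | ((Module.AEval.mapSubmodule ℂ V W.D).symm q : Submodule ℂ V) ∈ S}
  have hT : ∀ A (h : A ∈ S), Module.AEval.mapSubmodule ℂ V W.D ⟨A, hD A h⟩ ∈ T := by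
    intro A h
    simp only [T, Set.mem_ofPred_eq, OrderIso.symm_apply_apply]; exact h
  obtain ⟨A0, hA0⟩ := hS
  obtain ⟨M, hM, hmax⟩ := set_has_maximal_iff_noetherian.2 this T ⟨_, hT A0 hA0⟩
  refine ⟨_, hM, fun B hB hlt => hmax _ (hT B hB) ?_⟩
  rw [← OrderIso.symm_apply_lt]
  exact hlt

lemma exists_gen (hfin : W.IsFinite) (N : Submodule ℂ V) (hN : ∀ x ∈ N, W.D x ∈ N) :
    ∃ G : Finset V, (∀ g ∈ G, g ∈ N) ∧ N ≤ Submodule.span ℂ {x | ∃ g ∈ G, ∃ k : ℕ, x = (W.D ^ k) g} := by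
  have hno := W.aeval_noeth hfin
  obtain ⟨G, hG⟩ := hno.noetherian (Module.AEval.mapSubmodule ℂ V W.D ⟨N, hN⟩)
  classical
  refine ⟨G.image (Module.AEval'.of W.D).symm, ?_, ?_⟩
  · intro g hg
    obtain ⟨x, hx, rfl⟩ := Finset.mem_image.1 hg
    have : x ∈ Module.AEval.mapSubmodule ℂ V W.D ⟨N, hN⟩ := hG ▸ Submodule.subset_span hx
    exact (Module.AEval.mem_mapSubmodule_apply ℂ V W.D).1 this
  · intro v hv
    set Q := Submodule.span ℂ {x | ∃ g ∈ G.image (Module.AEval'.of W.D).symm, ∃ k : ℕ, x = (W.D ^ k) g} with hQ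
    have hQD : ∀ x ∈ Q, W.D x ∈ Q := by
      intro x hx
      have : Q ≤ Q.comap W.D := by
        refine Submodule.span_le.2 ?_
        rintro _ ⟨g, hg, k, rfl⟩
        refine Submodule.subset_span ⟨g, hg, k + 1, ?_⟩
        rw [pow_succ', Module.End.mul_apply]
      exact this hx
    have h1 : Module.AEval.mapSubmodule ℂ V W.D ⟨N, hN⟩ ≤ Module.AEval.mapSubmodule ℂ V W.D ⟨Q, hQD⟩ := by
      rw [← hG]
      refine Submodule.span_le.2 fun x hx => ?_
      refine (Module.AEval.mem_mapSubmodule_apply ℂ V W.D).2 (Submodule.subset_span ⟨_, Finset.mem_image_of_mem _ hx, 0, ?_⟩)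
      simp
    exact (OrderIso.le_iff_le _).1 h1 hv

lemma fd_of_free (hfin : W.IsFinite) (U : Submodule ℂ V)
    (hU : ∀ (m : ℕ) (u : ℕ → V), (∀ k, u k ∈ U) → ∑ k ∈ Finset.range m, (W.D ^ k) (u k) = 0 →
      ∀ k < m, u k = 0) : FiniteDimensional ℂ U := by
  have hno := W.aeval_noeth hfin
  let b := Module.Basis.ofVectorSpace ℂ U
  have hli : LinearIndependent (Polynomial ℂ) (fun i => Module.AEval'.of W.D (b i : V)) := by
    rw [linearIndependent_iff']
    intro t g hg i hi
    let m := t.sup (fun i => (g i).natDegree) + 1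
    have hm : ∀ i ∈ t, (g i).natDegree < m := fun i hi =>
      Nat.lt_succ_of_le (Finset.le_sup (f := fun i => (g i).natDegree) hi)
    let u : ℕ → V := fun k => ∑ i ∈ t, (g i).coeff k • (b i : V)
    have h0 : ∑ k ∈ Finset.range m, (W.D ^ k) (u k) = 0 := by
      apply (Module.AEval'.of W.D).injective
      rw [map_zero, ← hg]
      simp only [u, map_sum]
      rw [Finset.sum_comm]
      refine Finset.sum_congr rfl fun i hi => ?_
      have : g i • Module.AEval'.of W.D (b i : V) = Module.AEval'.of W.D (Polynomial.aeval W.D (g i) (b i : V)) := rfl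
      rw [this, Polynomial.aeval_eq_sum_range' (hm i hi)]
      simp only [LinearMap.sum_apply, LinearMap.smul_apply, map_sum, map_smul]
    have h1 := hU m u (fun k => Submodule.sum_mem _ fun i _ => Submodule.smul_mem _ _ (b i).2) h0
    ext k
    rw [Polynomial.coeff_zero]
    by_cases hk : k < m
    · have h2 : ∑ i ∈ t, (g i).coeff k • b i = 0 := by
        apply Subtype.ext
        simpa [u] using h1 k hk
      exact linearIndependent_iff'.1 b.linearIndependent t _ h2 i hi
    · exact Polynomial.coeff_eq_zero_of_natDegree_lt (by have := hm i hi; omega)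
  have := hli.finite_of_isNoetherian
  exact Module.Basis.finiteDimensional_of_finite b
end VertexAlgebra

namespace VertexAlgebra
variable {V : Type*} [AddCommGroup V] [Module ℂ V] (W : VertexAlgebra V)

/-- stability of `F` under all nonnegative modes of `N` -/
def Stab (N F : Submodule ℂ V) : Prop := ∀ s ∈ N, ∀ j : ℕ, ∀ x ∈ F, W.P j s x ∈ F

lemma P_Dpow (i : ℕ) (g : V) : ∀ (j : ℕ) (x : V), ∃ (c : ℂ) (j' : ℕ), W.P j ((W.D ^ i) g) x = c • W.P j' g x := by
  induction i with
  | zero => intro j x; exact ⟨1, j, by simp⟩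
  | succ i ih =>
    intro j x
    rw [pow_succ', Module.End.mul_apply, W.transl_inv]
    rcases j with _ | j
    · exact ⟨0, 0, by simp⟩
    · obtain ⟨c, j', h⟩ := ih j x
      refine ⟨-((j + 1 : ℕ) : ℂ) * c, j', ?_⟩
      rw [mul_smul, ← h]; simp

lemma modes_fd (hfin : W.IsFinite) (N : Submodule ℂ V) (hN : ∀ x ∈ N, W.D x ∈ N) (F : Submodule ℂ V)
    [FiniteDimensional ℂ F] : FiniteDimensional ℂ (W.posSpan N F) := by
  obtain ⟨G, hGN, hG⟩ := W.exists_gen hfin N hN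
  obtain ⟨B, hB⟩ := (Submodule.fg_iff_finiteDimensional F).2 inferInstance
  choose M hM using W.field_ax
  let J := G.sup fun g => B.sup fun x => M g x
  have hJ : ∀ g ∈ G, ∀ x ∈ B, ∀ j : ℕ, J ≤ j → W.P j g x = 0 := by
    intro g hg x hx j hj
    refine hM g x j (le_trans (le_trans ?_ (Finset.le_sup (f := fun g => B.sup fun x => M g x) hg)) hj)
    exact Finset.le_sup (f := fun x => M g x) hx
  classical
  let S : Finset V := (G ×ˢ (Finset.range J ×ˢ B)).image fun p => W.P (p.2.1 : ℤ) p.1 p.2.2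
  have hle : W.posSpan N F ≤ Submodule.span ℂ (S : Set V) := by
    refine Submodule.span_le.2 ?_
    rintro _ ⟨s, hs, x, hx, j, rfl⟩
    rw [← hB] at hx
    have hs' := hG hs
    clear hs
    rw [SetLike.mem_coe]
    induction hx using Submodule.span_induction with
    | zero => simp
    | add x y _ _ hx hy => rw [map_add]; exact Submodule.add_mem _ hx hy
    | smul c x _ hx => rw [map_smul]; exact Submodule.smul_mem _ _ hx
    | mem x hx =>
      induction hs' using Submodule.span_induction with
      | zero => simp
      | add a b _ _ ha hb => rw [map_add, LinearMap.add_apply]; exact Submodule.add_mem _ ha hb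
      | smul c a _ ha => rw [map_smul, LinearMap.smul_apply]; exact Submodule.smul_mem _ _ ha
      | mem a ha =>
        obtain ⟨g, hg, k, rfl⟩ := ha
        obtain ⟨c, j', h⟩ := W.P_Dpow k g j x
        rw [h]
        refine Submodule.smul_mem _ _ ?_
        by_cases hj : j' < J
        · refine Submodule.subset_span ?_
          refine Finset.mem_coe.2 (Finset.mem_image.2 ⟨(g, j', x), ?_, rfl⟩)
          simp only [Finset.mem_product, Finset.mem_range]
          exact ⟨hg, hj, hx⟩
        · rw [hJ g hg x hx j' (by omega)]; exact Submodule.zero_mem _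
  exact Submodule.finiteDimensional_of_le hle

lemma Stab.sup {N F F' : Submodule ℂ V} (h : W.Stab N F) (h' : W.Stab N F') : W.Stab N (F ⊔ F') := by
  intro s hs j x hx
  obtain ⟨y, hy, z, hz, rfl⟩ := Submodule.mem_sup.1 hx
  rw [map_add]
  exact Submodule.add_mem_sup (h s hs j y hy) (h' s hs j z hz)

/-- the locally finite part -/
def lfin (N : Submodule ℂ V) : Submodule ℂ V where
  carrier := {v | ∃ F : Submodule ℂ V, FiniteDimensional ℂ F ∧ W.Stab N F ∧ v ∈ F}
  zero_mem' := ⟨⊥, inferInstance, fun s _ j x hx => by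
    rw [Submodule.mem_bot] at hx; simp [hx], Submodule.zero_mem _⟩
  add_mem' := by
    rintro x y ⟨F, hF, hs, hx⟩ ⟨F', hF', hs', hy⟩
    exact ⟨F ⊔ F', inferInstance, Stab.sup W hs hs', Submodule.add_mem_sup hx hy⟩
  smul_mem' := by
    rintro c x ⟨F, hF, hs, hx⟩
    exact ⟨F, hF, hs, F.smul_mem c hx⟩

lemma lfin_stab (N : Submodule ℂ V) : W.Stab N (W.lfin N) := by
  rintro s hs j x ⟨F, hF, hst, hx⟩
  exact ⟨F, hF, hst, hst s hs j x hx⟩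

lemma lfin_D (N : Submodule ℂ V) : ∀ x ∈ W.lfin N, W.D x ∈ W.lfin N := by
  rintro x ⟨F, hF, hst, hx⟩
  refine ⟨F ⊔ F.map W.D, inferInstance, ?_, Submodule.mem_sup_right (Submodule.mem_map_of_mem hx)⟩
  intro s hs j y0 hy0
  obtain ⟨y, hy, z, hz, rfl⟩ := Submodule.mem_sup.1 hy0
  obtain ⟨w, hw, rfl⟩ := hz
  rw [map_add, P_D]
  refine Submodule.add_mem _ (Submodule.mem_sup_left (hst s hs j y hy)) (Submodule.add_mem _
    (Submodule.mem_sup_right (Submodule.mem_map_of_mem (hst s hs j w hw))) ?_)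
  rcases j with _ | j
  · simp
  · refine Submodule.smul_mem _ _ (Submodule.mem_sup_left ?_)
    simpa using hst s hs j w hw

lemma lfin_cover (N A : Submodule ℂ V) (hA : A.FG) (hle : A ≤ W.lfin N) :
    ∃ A1 : Submodule ℂ V, FiniteDimensional ℂ A1 ∧ W.Stab N A1 ∧ A ≤ A1 := by
  induction A, hA using Submodule.fg_induction with
  | singleton x =>
    obtain ⟨F, hF, hs, hx⟩ := hle (Submodule.mem_span_singleton_self x)
    exact ⟨F, hF, hs, (Submodule.span_singleton_le_iff_mem _ _).2 hx⟩
  | sup A B _ _ hA hB =>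
    obtain ⟨F, hF, hs, hx⟩ := hA (le_sup_left.trans hle)
    obtain ⟨F', hF', hs', hx'⟩ := hB (le_sup_right.trans hle)
    exact ⟨F ⊔ F', inferInstance, Stab.sup W hs hs', sup_le_sup hx hx'⟩

lemma fd_split (A F Q : Submodule ℂ V) (hA : A.FG) (hle : A ≤ F ⊔ Q) :
    ∃ A1 : Submodule ℂ V, A1.FG ∧ A1 ≤ Q ∧ A ≤ F ⊔ A1 := by
  induction A, hA using Submodule.fg_induction with
  | singleton x =>
    obtain ⟨y, hy, z, hz, rfl⟩ := Submodule.mem_sup.1 (hle (Submodule.mem_span_singleton_self x))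
    refine ⟨Submodule.span ℂ {z}, Submodule.fg_span_singleton z, (Submodule.span_singleton_le_iff_mem _ _).2 hz, ?_⟩
    rw [Submodule.span_singleton_le_iff_mem]
    exact Submodule.add_mem_sup hy (Submodule.mem_span_singleton_self z)
  | sup A B _ _ hA hB =>
    obtain ⟨A1, h1, h2, h3⟩ := hA (le_sup_left.trans hle)
    obtain ⟨A2, h4, h5, h6⟩ := hB (le_sup_right.trans hle)
    exact ⟨A1 ⊔ A2, h1.sup h4, sup_le h2 h5, sup_le (h3.trans (sup_le_sup_left le_sup_left _))
      (h6.trans (sup_le_sup_left le_sup_right _))⟩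

lemma lfin_ext (hfin : W.IsFinite) (N : Submodule ℂ V) (hN : ∀ x ∈ N, W.D x ∈ N) (F : Submodule ℂ V)
    [FiniteDimensional ℂ F] (h : W.posSpan N F ≤ F ⊔ W.lfin N) : F ≤ W.lfin N := by
  have := W.modes_fd hfin N hN F
  obtain ⟨A0, h0, h1, h2⟩ := fd_split _ _ _ ((Submodule.fg_iff_finiteDimensional _).2 this) h
  obtain ⟨A1, h3, h4, h5⟩ := W.lfin_cover N A0 h0 h1
  intro x hx
  refine ⟨F ⊔ A1, inferInstance, ?_, Submodule.mem_sup_left hx⟩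
  intro s hs j y0 hy0
  obtain ⟨y, hy, z, hz, rfl⟩ := Submodule.mem_sup.1 hy0
  rw [map_add]
  refine Submodule.add_mem _ ?_ (Submodule.mem_sup_right (h4 s hs j z hz))
  exact sup_le_sup_left h5 F (h2 (Submodule.subset_span ⟨s, hs, y, hy, j, rfl⟩))

/-- elements of `N` mapping `K` into `Q` -/
def annOf (N K Q : Submodule ℂ V) : Submodule ℂ V where
  carrier := {z | z ∈ N ∧ ∀ j : ℕ, ∀ x ∈ K, W.P j z x ∈ Q}
  zero_mem' := ⟨N.zero_mem, fun j x _ => by simp⟩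
  add_mem' := by
    rintro a b ⟨ha, ha'⟩ ⟨hb, hb'⟩
    refine ⟨N.add_mem ha hb, fun j x hx => ?_⟩
    rw [map_add, LinearMap.add_apply]; exact Q.add_mem (ha' j x hx) (hb' j x hx)
  smul_mem' := by
    rintro c a ⟨ha, ha'⟩
    refine ⟨N.smul_mem c ha, fun j x hx => ?_⟩
    rw [map_smul, LinearMap.smul_apply]; exact Q.smul_mem c (ha' j x hx)

lemma annOf_D (N K Q : Submodule ℂ V) (hN : ∀ x ∈ N, W.D x ∈ N) : ∀ x ∈ W.annOf N K Q, W.D x ∈ W.annOf N K Q := by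
  rintro z ⟨hz, h⟩
  refine ⟨hN z hz, fun j x hx => ?_⟩
  rw [W.transl_inv]
  rcases j with _ | j
  · simp
  · exact Q.smul_mem _ (by simpa using h j x hx)

/-- elements of `K` mapped into `Q` by the modes of `z` of index at least `n` -/
def kerOf (z : V) (K Q : Submodule ℂ V) (n : ℕ) : Submodule ℂ V where
  carrier := {v | v ∈ K ∧ ∀ j : ℕ, n ≤ j → W.P j z v ∈ Q}
  zero_mem' := ⟨K.zero_mem, fun j _ => by simp⟩
  add_mem' := by
    rintro a b ⟨ha, ha'⟩ ⟨hb, hb'⟩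
    refine ⟨K.add_mem ha hb, fun j x => ?_⟩
    rw [map_add]; exact Q.add_mem (ha' j x) (hb' j x)
  smul_mem' := by
    rintro c a ⟨ha, ha'⟩
    refine ⟨K.smul_mem c ha, fun j x => ?_⟩
    rw [map_smul]; exact Q.smul_mem c (ha' j x)

lemma kerOf_stab (N K Q : Submodule ℂ V) (hK : W.Stab N K) (hQ : W.Stab N Q) (z : V)
    (hz : ∀ b ∈ N, ∀ i : ℕ, W.P i b z ∈ W.annOf N K Q) (n : ℕ) : W.Stab N (W.kerOf z K Q n) := by
  rintro b hb k v ⟨hv, hv'⟩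
  refine ⟨hK b hb k v hv, fun j hj => ?_⟩
  have h := W.comm_formula k j b z v
  rw [← sub_eq_iff_eq_add] at h
  rw [← h]
  refine Q.sub_mem (hQ b hb k _ (hv' j hj)) (Q.sum_mem fun i hi => Q.smul_mem _ ?_)
  have hi' : i ≤ k := by simpa [Nat.lt_succ_iff] using hi
  have := (hz b hb i).2 (k + j - i) v hv
  rw [Nat.cast_sub (by omega)] at this
  simpa using this

lemma kerOf_zero_D (K Q : Submodule ℂ V) (hK : ∀ x ∈ K, W.D x ∈ K) (hQ : ∀ x ∈ Q, W.D x ∈ Q) (z : V) :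
    ∀ x ∈ W.kerOf z K Q 0, W.D x ∈ W.kerOf z K Q 0 := by
  rintro v ⟨hv, hv'⟩
  refine ⟨hK v hv, fun j _ => ?_⟩
  rw [P_D]
  refine Q.add_mem (hQ _ (hv' j (Nat.zero_le _))) ?_
  rcases j with _ | j
  · simp
  · exact Q.smul_mem _ (by simpa using hv' j (Nat.zero_le _))

lemma top_mode (Q : Submodule ℂ V) (hQ : ∀ x ∈ Q, W.D x ∈ Q) (z u : V) (n : ℕ)
    (hu : ∀ j : ℕ, n + 1 ≤ j → W.P j z u ∈ Q) (k : ℕ) :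
    (∀ j : ℕ, n + k + 1 ≤ j → W.P j z ((W.D ^ k) u) ∈ Q) ∧
    ∃ c : ℂ, c ≠ 0 ∧ W.P ((n + k : ℕ) : ℤ) z ((W.D ^ k) u) - c • W.P n z u ∈ Q := by
  induction k with
  | zero => exact ⟨by simpa using hu, 1, one_ne_zero, by simp⟩
  | succ k ih =>
    obtain ⟨h1, c, hc, h2⟩ := ih
    constructor
    · intro j hj
      obtain ⟨j, rfl⟩ : ∃ i, j = i + 1 := ⟨j - 1, by omega⟩
      rw [pow_succ', Module.End.mul_apply, P_D]
      refine Q.add_mem (hQ _ (h1 _ (by omega))) (Q.smul_mem _ ?_)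
      simpa using h1 j (by omega)
    · refine ⟨((n + k + 1 : ℕ) : ℂ) * c, mul_ne_zero (Nat.cast_ne_zero.2 (Nat.succ_ne_zero (n + k))) hc, ?_⟩
      have e : W.P ((n + (k + 1) : ℕ) : ℤ) z ((W.D ^ (k + 1)) u) = W.D (W.P ((n + k + 1 : ℕ) : ℤ) z ((W.D ^ k) u))
          + ((n + k + 1 : ℕ) : ℂ) • W.P ((n + k : ℕ) : ℤ) z ((W.D ^ k) u) := by
        rw [pow_succ', Module.End.mul_apply, ← add_assoc, P_D]; simp
      rw [e, mul_smul, add_sub_assoc, ← smul_sub]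
      exact Q.add_mem (hQ _ (h1 _ (by omega))) (Q.smul_mem _ h2)

lemma lfin_top (hfin : W.IsFinite) (N : Submodule ℂ V) (hN : W.IsConfSubalgebra N)
    (hnilp : ∃ k : ℕ, W.lcsOf N k = ⊥) : W.lfin N = ⊤ := by
  by_contra hne
  set Q := W.lfin N with hQdef
  have hQs : W.Stab N Q := W.lfin_stab N
  have hQD : ∀ x ∈ Q, W.D x ∈ Q := W.lfin_D N
  let S : Set (Submodule ℂ V) := {A | ∃ K, Q < K ∧ W.Stab N K ∧ (∀ x ∈ K, W.D x ∈ K) ∧ A = W.annOf N K Q}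
  obtain ⟨A, ⟨K, hQK, hKs, hKD, rfl⟩, hmax⟩ := W.exists_max hfin S
    ⟨_, ⊤, lt_top_iff_ne_top.2 hne, fun _ _ _ _ _ => Submodule.mem_top, fun _ _ => Submodule.mem_top, rfl⟩ (by
      rintro _ ⟨K, -, -, -, rfl⟩
      exact W.annOf_D N K Q hN.1)
  obtain ⟨v, hvK, hvQ⟩ := SetLike.exists_of_lt hQK
  have hnot : ¬ N ≤ W.annOf N K Q := by
    intro h
    apply hvQ
    have : Submodule.span ℂ {v} ≤ Q := by
      refine W.lfin_ext hfin N hN.1 _ (le_trans ?_ le_sup_right)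
      refine Submodule.span_le.2 ?_
      rintro _ ⟨s, hs, x, hx, j, rfl⟩
      refine (h hs).2 j x ?_
      exact (Submodule.span_singleton_le_iff_mem _ _).2 hvK hx
    exact this (Submodule.mem_span_singleton_self v)
  obtain ⟨z, hzN, hzA, hz⟩ : ∃ z ∈ N, z ∉ W.annOf N K Q ∧ ∀ b ∈ N, ∀ i : ℕ, W.P i b z ∈ W.annOf N K Q := by
    classical
    have hex : ∃ k, W.lcsOf N k ≤ W.annOf N K Q := by
      obtain ⟨k, hk⟩ := hnilp; exact ⟨k, hk ▸ bot_le⟩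
    have hsp := Nat.find_spec hex
    rcases hk : Nat.find hex with _ | i
    · rw [hk] at hsp; exact absurd hsp hnot
    · rw [hk] at hsp
      have := Nat.find_min hex (m := i) (by omega)
      obtain ⟨z, hz1, hz2⟩ := SetLike.not_le_iff_exists.1 this
      exact ⟨z, W.lcsOf_le N hN i hz1, hz2, fun b hb j => hsp (Submodule.subset_span ⟨b, hb, z, hz1, j, rfl⟩)⟩
  have hQle : ∀ n, Q ≤ W.kerOf z K Q n := fun n x hx => ⟨hQK.le hx, fun j _ => hQs z hzN j x hx⟩
  have hker : ∀ n, W.kerOf z K Q n ≤ Q := by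
    intro n
    induction n with
    | zero =>
      by_contra hc
      refine hmax (W.annOf N (W.kerOf z K Q 0) Q) ⟨_, lt_of_le_not_ge (hQle 0) hc,
        W.kerOf_stab N K Q hKs hQs z hz 0, W.kerOf_zero_D K Q hKD hQD z, rfl⟩ ?_
      refine lt_of_le_not_ge (fun a ha => ⟨ha.1, fun j x hx => ha.2 j x hx.1⟩) fun h => hzA (h ?_)
      exact ⟨hzN, fun j x hx => hx.2 j (Nat.zero_le _)⟩
    | succ n ih =>
      obtain ⟨C, hC⟩ := Submodule.exists_isCompl Q
      let U := C ⊓ W.kerOf z K Q (n + 1)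
      have hU : W.kerOf z K Q (n + 1) ≤ U ⊔ Q := by
        intro x hx
        obtain ⟨q, hq, c, hc, rfl⟩ := Submodule.mem_sup.1 (show x ∈ Q ⊔ C by rw [hC.sup_eq_top]; trivial)
        have : c ∈ W.kerOf z K Q (n + 1) := by
          have := Submodule.sub_mem _ hx (hQle (n+1) hq)
          simpa using this
        rw [add_comm]
        exact Submodule.add_mem_sup ⟨hc, this⟩ hq
      have hfd : FiniteDimensional ℂ U := by
        apply W.fd_of_free hfin
        intro m
        induction m with
        | zero => intro u _ _ k hk; omega
        | succ m ihm =>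
          intro u hu h0
          have hm : u m = 0 := by
            have h1 := congrArg (W.P ((n + m : ℕ) : ℤ) z) h0
            rw [map_sum, map_zero, Finset.sum_range_succ] at h1
            have h2 : ∑ k ∈ Finset.range m, W.P ((n + m : ℕ) : ℤ) z ((W.D ^ k) (u k)) ∈ Q := by
              refine Q.sum_mem fun k hk => ?_
              have hk' := Finset.mem_range.1 hk
              exact (W.top_mode Q hQD z (u k) n (hu k).2.2 k).1 _ (by omega)
            obtain ⟨-, c, hc, h3⟩ := W.top_mode Q hQD z (u m) n (hu m).2.2 m
            have h4 : W.P ((n + m : ℕ) : ℤ) z ((W.D ^ m) (u m)) ∈ Q := by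
              rw [← neg_eq_of_add_eq_zero_right h1]; exact Q.neg_mem h2
            have h5 : c • W.P n z (u m) ∈ Q := by simpa using Q.sub_mem h4 h3
            have h6 : W.P n z (u m) ∈ Q := (Q.smul_mem_iff hc).1 h5
            have h7 : u m ∈ Q := ih ⟨(hu m).2.1, fun j hj => by
              rcases Nat.eq_or_lt_of_le hj with rfl | hj
              · exact h6
              · exact (hu m).2.2 j hj⟩
            exact Submodule.disjoint_def.1 hC.disjoint _ h7 (hu m).1
          intro k hk
          rcases Nat.lt_succ_iff_lt_or_eq.1 hk with h | rfl
          · refine ihm u hu ?_ k h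
            rw [Finset.sum_range_succ, hm, map_zero, add_zero] at h0
            exact h0
          · exact hm
      have hUQ : U ≤ Q := by
        refine W.lfin_ext hfin N hN.1 U ?_
        refine le_trans (Submodule.span_le.2 ?_) hU
        rintro _ ⟨s, hs, x, hx, j, rfl⟩
        exact W.kerOf_stab N K Q hKs hQs z hz (n + 1) s hs j x hx.2
      exact hU.trans (sup_le hUQ le_rfl)
  obtain ⟨M, hM⟩ := W.field_ax z v
  exact hvQ (hker M ⟨hvK, fun j hj => by rw [hM j hj]; exact Q.zero_mem⟩)
end VertexAlgebra

open VertexAlgebra in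
/-- in a finite reduced vertex algebra, every element of a nilpotent Lie
conformal subalgebra `N` acts nilpotently in the adjoint conformal action: all
sufficiently long iterated brackets `[s_{λ₁}[s_{λ₂}[⋯[s_{λₙ} v]⋯]]]` vanish
(coefficientwise, for every choice of coefficient indices). -/
theorem nilpotent_subalgebra_acts_nilpotently {V : Type*} [AddCommGroup V] [Module ℂ V]
    (W : VertexAlgebra V) (hfin : W.IsFinite) (hred : W.IsReduced)
    (N : Submodule ℂ V) (hN : W.IsConfSubalgebra N)
    (hnilp : ∃ k : ℕ, W.lcsOf N k = ⊥) :
    ∀ s ∈ N, ∀ v : V, ∃ n : ℕ, ∀ ks : List ℕ, n ≤ ks.length →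
      ks.foldr (fun k w => W.P k s w) v = 0 := by
  intro s hs v
  have hdec : (⨆ φ : ℕ → ℂ, ⨆ i, W.gw s φ i) = ⊤ := by
    rw [eq_top_iff]
    intro x _
    have hx : x ∈ W.lfin N := by rw [W.lfin_top hfin N hN hnilp]; exact Submodule.mem_top
    obtain ⟨F, hF, hst, hxF⟩ := hx
    exact W.le_gw N hN hnilp F hst s hs hxF
  obtain ⟨i, hi⟩ := W.final_of_decomp hfin hred s hdec v
  refine ⟨i, fun ks h => ?_⟩
  have e : (do let a ← ks; pure (a : ℤ)) = ks.map (fun a : ℕ => (a : ℤ)) := by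
    rw [bind_pure_comp]; rfl
  rw [e, List.foldr_map]
  exact W.foldr_zero s ks i v hi h
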